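/- Assume that g_2(t) and g_3(t) are algebraic over C(t). Then for every rational number lambda that is not an integer, the functions t -> wp(lambda omega_1(t), t) and t -> (d wp/d omega)(lambda omega_1(t), t) are algebraic over C(t). The same conclusion holds with omega_1 replaced by omega_2. -/

import Mathlib

open scoped BigOperators

namespace WeierstrassElliptic

/-- The lattice `ℤω₁ + ℤω₂ ⊆ ℂ`. -/
def latticeSet (ω₁ ω₂ : ℂ) : Set ℂ :=
  {z | ∃ m n : ℤ, z = (m : ℂ) * ω₁ + (n : ℂ) * ω₂}

/-- The point of the lattice indexed by `p ∈ ℤ × ℤ`. -/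
def latPt (ω₁ ω₂ : ℂ) (p : ℤ × ℤ) : ℂ := (p.1 : ℂ) * ω₁ + (p.2 : ℂ) * ω₂

/-- The Weierstrass `℘`-function of the lattice `ℤω₁ + ℤω₂`:
`℘(z) = z⁻² + ∑_{λ ∈ Λ, λ ≠ 0} ((z+λ)⁻² - λ⁻²)`. -/
noncomputable def wp (ω₁ ω₂ : ℂ) (z : ℂ) : ℂ :=
  (z ^ 2)⁻¹ + ∑' p : ℤ × ℤ,
    if p = 0 then 0
    else ((z + latPt ω₁ ω₂ p) ^ 2)⁻¹ - ((latPt ω₁ ω₂ p) ^ 2)⁻¹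

/-- The invariant `g₂ = 60 ∑_{λ ∈ Λ, λ ≠ 0} λ⁻⁴`. -/
noncomputable def g2 (ω₁ ω₂ : ℂ) : ℂ :=
  60 * ∑' p : ℤ × ℤ, if p = 0 then 0 else ((latPt ω₁ ω₂ p) ^ 4)⁻¹

/-- The invariant `g₃ = 140 ∑_{λ ∈ Λ, λ ≠ 0} λ⁻⁶`. -/
noncomputable def g3 (ω₁ ω₂ : ℂ) : ℂ :=
  140 * ∑' p : ℤ × ℤ, if p = 0 then 0 else ((latPt ω₁ ω₂ p) ^ 6)⁻¹

/-- The Weierstrass `ζ`-function: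
`ζ(z) = z⁻¹ + ∑_{λ ∈ Λ, λ ≠ 0} ((z-λ)⁻¹ + λ⁻¹ + z λ⁻²)`. -/
noncomputable def wzeta (ω₁ ω₂ : ℂ) (z : ℂ) : ℂ :=
  z⁻¹ + ∑' p : ℤ × ℤ,
    if p = 0 then 0
    else (z - latPt ω₁ ω₂ p)⁻¹ + (latPt ω₁ ω₂ p)⁻¹ + z * ((latPt ω₁ ω₂ p) ^ 2)⁻¹

/-- A function `c : (0,1) → ℂ` (defined on all of `ℝ`, but only its restriction to `(0,1)`
matters) is algebraic over `ℂ(t)` if there is a nonzero polynomial `P ∈ ℂ[T,Z]` with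
`P(t, c(t)) = 0` for all `t ∈ (0,1)`.  Here `T = X 0` and `Z = X 1`. -/
def AlgebraicOverCt (c : ℝ → ℂ) : Prop :=
  ∃ P : MvPolynomial (Fin 2) ℂ, P ≠ 0 ∧
    ∀ t ∈ Set.Ioo (0 : ℝ) 1, MvPolynomial.eval ![(t : ℂ), c t] P = 0

/-- Membership in the set `X`: `b : (0,1) → ℂ` is such that for every `t`, either `b(t)`
lies in the lattice `Λ(t)` (a pole of `℘`), or `t ↦ ℘(b(t),t)` is algebraic over `ℂ(t)`. -/
def MemX (ω₁ ω₂ b : ℝ → ℂ) : Prop :=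
  ∀ t ∈ Set.Ioo (0 : ℝ) 1,
    b t ∈ latticeSet (ω₁ t) (ω₂ t) ∨
      AlgebraicOverCt (fun s => wp (ω₁ s) (ω₂ s) (b s))

end WeierstrassElliptic

/-!
For generic `z` the abscissae `℘ (n z)` of the multiples of `(℘ z, ℘' z)` on
`Y² = 4X³ - g₂X - g₃` satisfy `℘ (n z) Ψₙ²(℘ z) = Φₙ(℘ z)`, where `Ψₙ²` and `Φₙ` are the division
polynomials; this follows from the addition theorem for `℘`, which makes
`(℘ z - ℘ (n z)) hₙ² = hₙ₊₁ hₙ₋₁` the recurrence of a normalised elliptic divisibility sequence `h`.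
When `z` tends to an `n`-torsion point `z₀ ∉ Λ`, the factor `℘ (n z)` has a pole, so `℘ z₀` is a
root of `Ψₙ²`. The leading coefficient of `Ψₙ²` is `n²` and its other coefficients are polynomials
in `g₂` and `g₃`; hence along a family of lattices `℘ z₀` is algebraic as soon as `g₂` and `g₃`
are, and so is `℘' z₀`, whose square is `4 ℘ z₀³ - g₂ ℘ z₀ - g₃`.
-/

open Polynomial Filter Topology

namespace WeierstrassElliptic

section EllipticDivisibilitySequence

theorem eq_normEDS_of_recurrence {R : Type*} [CommRing R] [IsDomain R] {b c d : R} (hb : b ≠ 0)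
    {h : ℕ → R} (h_zero : h 0 = 0) (h_one : h 1 = 1) (h_two : h 2 = b) (h_three : h 3 = c)
    (h_four : h 4 = d * b)
    (h_odd : ∀ m, h (2 * (m + 2) + 1) = h (m + 4) * h (m + 2) ^ 3 - h (m + 1) * h (m + 3) ^ 3)
    (h_even : ∀ m, h (2 * (m + 3)) * b =
      h (m + 2) ^ 2 * h (m + 3) * h (m + 5) - h (m + 1) * h (m + 3) * h (m + 4) ^ 2) (n : ℕ) :
    h n = normEDS b c d n := by
  induction n using normEDSRec with
  | zero => simpa using h_zero
  | one => simpa using h_one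
  | two => simpa using h_two
  | three => simpa using h_three
  | four => simpa using h_four
  | even m h₁ h₂ h₃ h₄ h₅ =>
    have h_rec := normEDS_even b c d (m + 3)
    apply mul_right_cancel₀ hb
    rw [h_even, h₁, h₂, h₃, h₄, h₅]
    push_cast at h_rec ⊢
    ring_nf at h_rec ⊢
    exact h_rec.symm
  | odd m h₁ h₂ h₃ h₄ =>
    have h_rec := normEDS_odd b c d (m + 2)
    rw [h_odd, h₁, h₂, h₃, h₄]
    push_cast at h_rec ⊢
    ring_nf at h_rec ⊢
    exact h_rec.symm

end EllipticDivisibilitySequence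

section MultiplesOfAPoint

variable {F : Type*} [Field F]

/-- The curve `Y² = X³ + a X + b`. The point `(℘ z, ℘' z / 2)` lies on it for
`a = -g₂ / 4` and `b = -g₃ / 4`. -/
def shortCurve {R : Type*} [CommRing R] (a b : R) : WeierstrassCurve R :=
  ⟨0, 0, 0, a, b⟩

/-- The symmetric form governing addition on `Y² = X³ + a X + b`: as a polynomial in `w`, it is
`(x(P) - x(Q))² (w - x(P + Q)) (w - x(P - Q))` when `x = x(P)` and `y = x(Q)`. -/
def additionForm {R : Type*} [CommRing R] (a b x y w : R) : R :=
  (x * y + x * w + y * w - a) ^ 2 - 4 * (x + y + w) * (x * y * w + b)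

/-- `x n` behaves for `n ≥ 1` like the abscissa of the multiple `n P` of a point `P` of infinite
order on `Y² = X³ + a X + b`, and `y` like twice the ordinate of `P`. -/
structure IsAbscissaSequence (a b : F) (x : ℕ → F) (y : F) : Prop where
  one_ne : ∀ n, x 1 ≠ x (n + 2)
  double : ∀ w, (x 2 - w) * y ^ 2 = additionForm a b (x 1) (x 1) w
  add_sub : ∀ n w, (w - x (n + 3)) * (w - x (n + 1)) * (x (n + 2) - x 1) ^ 2 =
    additionForm a b (x (n + 2)) (x 1) w

/-- The elliptic divisibility sequence of a point `P`, recovered from the abscissae `x n` of its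
multiples `n P` and from `y`, its value at `2`, by solving
`(x 1 - x n) h_n² = h_{n + 1} h_{n - 1}` for `h_{n + 1}`. -/
def edsOfAbscissae (x : ℕ → F) (y : F) : ℕ → F
  | 0 => 0
  | 1 => 1
  | 2 => y
  | n + 3 => (x 1 - x (n + 2)) * edsOfAbscissae x y (n + 2) ^ 2 / edsOfAbscissae x y (n + 1)

namespace IsAbscissaSequence

variable {a b : F} {x : ℕ → F} {y : F}

local notation "h" => edsOfAbscissae x y

theorem double_symm (hx : IsAbscissaSequence a b x y) (m : ℕ) :
    (x 2 - x (m + 2)) * y ^ 2 =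
      (x 1 - x (m + 3)) * (x 1 - x (m + 1)) * (x 1 - x (m + 2)) ^ 2 := by
  have h_double := hx.double (x (m + 2))
  have h_add := hx.add_sub m (x 1)
  unfold additionForm at h_double h_add
  linear_combination h_double - h_add

theorem add_sub_symm (hx : IsAbscissaSequence a b x y) (m n : ℕ) :
    (x (m + 2) - x (n + 3)) * (x (m + 2) - x (n + 1)) * (x 1 - x (n + 2)) ^ 2 =
      (x (n + 2) - x (m + 3)) * (x (n + 2) - x (m + 1)) * (x 1 - x (m + 2)) ^ 2 := by
  have h_left := hx.add_sub n (x (m + 2))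
  have h_right := hx.add_sub m (x (n + 2))
  unfold additionForm at h_left h_right
  linear_combination h_left - h_right

theorem y_ne_zero (hx : IsAbscissaSequence a b x y) : y ≠ 0 := by
  rintro rfl
  have h_double := hx.double_symm 1
  have h₁ := sub_ne_zero.mpr (hx.one_ne 2)
  have h₂ := sub_ne_zero.mpr (hx.one_ne 0)
  have h₃ := sub_ne_zero.mpr (hx.one_ne 1)
  simp_all

theorem y_sq (hx : IsAbscissaSequence a b x y) :
    y ^ 2 = (shortCurve a b).Ψ₂Sq.eval (x 1) := by
  have h_zero := hx.double 0
  have h_one := hx.double 1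
  unfold additionForm at h_zero h_one
  simp only [WeierstrassCurve.Ψ₂Sq, WeierstrassCurve.b₂, WeierstrassCurve.b₄, WeierstrassCurve.b₆,
    shortCurve, eval_add, eval_mul, eval_pow, eval_C, eval_X]
  linear_combination h_zero - h_one

theorem eds_ne_zero (hx : IsAbscissaSequence a b x y) (n : ℕ) : h (n + 1) ≠ 0 := by
  induction n using Nat.twoStepInduction with
  | zero => exact one_ne_zero
  | one => exact hx.y_ne_zero
  | more n ih₁ ih₂ =>
    exact div_ne_zero (mul_ne_zero (sub_ne_zero.mpr (hx.one_ne n)) (pow_ne_zero 2 ih₂)) ih₁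

theorem eds_add_two_mul (hx : IsAbscissaSequence a b x y) (n : ℕ) :
    h (n + 2) * h n = (x 1 - x (n + 1)) * h (n + 1) ^ 2 := by
  cases n with
  | zero => simp [edsOfAbscissae]
  | succ n => exact div_mul_cancel₀ _ (hx.eds_ne_zero n)

theorem eds_add_four_mul (hx : IsAbscissaSequence a b x y) (k : ℕ) :
    h (k + 4) * h k = (x 2 - x (k + 2)) * h (k + 2) ^ 2 * y ^ 2 := by
  cases k with
  | zero => simp [edsOfAbscissae]
  | succ k =>
    have below := hx.eds_add_two_mul (k + 1)
    have middle := hx.eds_add_two_mul (k + 2)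
    have above := hx.eds_add_two_mul (k + 3)
    have h_double := hx.double_symm (k + 1)
    apply mul_right_cancel₀ (pow_ne_zero 2 (hx.eds_ne_zero (k + 2)))
    simp only [add_assoc, Nat.reduceAdd] at *
    calc h (k + 5) * h (k + 1) * h (k + 3) ^ 2
        = (h (k + 5) * h (k + 3)) * (h (k + 3) * h (k + 1)) := by ring
      _ = (x 1 - x (k + 4)) * (x 1 - x (k + 2)) * (h (k + 4) * h (k + 2)) ^ 2 := by
        rw [above, below]; ring
      _ = (x 1 - x (k + 4)) * (x 1 - x (k + 2)) * (x 1 - x (k + 3)) ^ 2 * h (k + 3) ^ 4 := by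
        rw [middle]; ring
      _ = _ := by rw [← h_double]; ring

theorem eds_add_mul_sub_step (hx : IsAbscissaSequence a b x y) {n k : ℕ}
    (ih_middle : h (2 * n + k + 5) * h (k + 3) =
      (x (n + 1) - x (n + k + 4)) * h (n + k + 4) ^ 2 * h (n + 1) ^ 2)
    (ih_above : h (2 * n + k + 7) * h (k + 3) =
      (x (n + 2) - x (n + k + 5)) * h (n + k + 5) ^ 2 * h (n + 2) ^ 2)
    (ih_below : h (2 * n + k + 5) * h (k + 1) =
      (x (n + 2) - x (n + k + 3)) * h (n + k + 3) ^ 2 * h (n + 2) ^ 2) :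
    h (2 * n + k + 7) * h (k + 1) =
      (x (n + 3) - x (n + k + 4)) * h (n + k + 4) ^ 2 * h (n + 3) ^ 2 := by
  have eds_n : h (n + 3) * h (n + 1) = (x 1 - x (n + 2)) * h (n + 2) ^ 2 :=
    hx.eds_add_two_mul (n + 1)
  have eds_m : h (n + k + 5) * h (n + k + 3) = (x 1 - x (n + k + 4)) * h (n + k + 4) ^ 2 :=
    hx.eds_add_two_mul (n + k + 3)
  have x_symm := hx.add_sub_symm (n + k + 2) n
  apply mul_right_cancel₀
    (mul_ne_zero (hx.eds_ne_zero (2 * n + k + 4)) (hx.eds_ne_zero (k + 2)))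
  calc h (2 * n + k + 7) * h (k + 1) * (h (2 * n + k + 5) * h (k + 3))
      = (h (2 * n + k + 7) * h (k + 3)) * (h (2 * n + k + 5) * h (k + 1)) := by ring
    _ = (x (n + 2) - x (n + k + 5)) * (x (n + 2) - x (n + k + 3)) *
          (h (n + k + 5) * h (n + k + 3)) ^ 2 * h (n + 2) ^ 4 := by
      rw [ih_above, ih_below]; ring
    _ = (x (n + k + 4) - x (n + 3)) * (x (n + k + 4) - x (n + 1)) *
          ((x 1 - x (n + 2)) * h (n + 2) ^ 2) ^ 2 * h (n + k + 4) ^ 4 := by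
      rw [eds_m]
      linear_combination -h (n + k + 4) ^ 4 * h (n + 2) ^ 4 * x_symm
    _ = _ := by rw [← eds_n, ih_middle]; ring

/-- The identity `h_{M + N} h_{M - N} = (x_N - x_M) h_M² h_N²` for `N = n + 1` and `M = N + k`. -/
theorem eds_add_mul_sub (hx : IsAbscissaSequence a b x y) (n k : ℕ) :
    h (2 * n + k + 2) * h k =
      (x (n + 1) - x (n + k + 1)) * h (n + k + 1) ^ 2 * h (n + 1) ^ 2 := by
  induction n using Nat.twoStepInduction generalizing k with
  | zero => simpa [edsOfAbscissae] using hx.eds_add_two_mul k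
  | one => simpa [edsOfAbscissae, add_comm, add_left_comm] using hx.eds_add_four_mul k
  | more n ih₁ ih₂ =>
    cases k with
    | zero => simp [edsOfAbscissae]
    | succ k =>
      rw [show 2 * (n + 2) + (k + 1) + 2 = 2 * n + k + 7 by ring,
        show n + 2 + (k + 1) + 1 = n + k + 4 by ring]
      refine hx.eds_add_mul_sub_step (ih₁ (k + 3)) ?_ ?_
      · convert ih₂ (k + 3) using 3 <;> ring_nf
      · convert ih₂ (k + 1) using 3 <;> ring_nf

theorem eds_even (hx : IsAbscissaSequence a b x y) (m : ℕ) :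
    h (2 * (m + 3)) * y =
      h (m + 2) ^ 2 * h (m + 3) * h (m + 5) - h (m + 1) * h (m + 3) * h (m + 4) ^ 2 := by
  have above : h (m + 5) * h (m + 3) = (x 1 - x (m + 4)) * h (m + 4) ^ 2 :=
    hx.eds_add_two_mul (m + 3)
  have below : h (m + 3) * h (m + 1) = (x 1 - x (m + 2)) * h (m + 2) ^ 2 :=
    hx.eds_add_two_mul (m + 1)
  have double : h (2 * (m + 3)) * y =
      (x (m + 2) - x (m + 4)) * h (m + 4) ^ 2 * h (m + 2) ^ 2 :=
    hx.eds_add_mul_sub (m + 1) 2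
  linear_combination double - h (m + 2) ^ 2 * above + h (m + 4) ^ 2 * below

theorem eds_odd (hx : IsAbscissaSequence a b x y) (m : ℕ) :
    h (2 * (m + 2) + 1) = h (m + 4) * h (m + 2) ^ 3 - h (m + 1) * h (m + 3) ^ 3 := by
  have above : h (m + 4) * h (m + 2) = (x 1 - x (m + 3)) * h (m + 3) ^ 2 :=
    hx.eds_add_two_mul (m + 2)
  have below : h (m + 3) * h (m + 1) = (x 1 - x (m + 2)) * h (m + 2) ^ 2 :=
    hx.eds_add_two_mul (m + 1)
  have double : h (2 * (m + 2) + 1) * 1 =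
      (x (m + 2) - x (m + 3)) * h (m + 3) ^ 2 * h (m + 2) ^ 2 :=
    hx.eds_add_mul_sub (m + 1) 1
  linear_combination double - h (m + 2) ^ 2 * above + h (m + 3) ^ 2 * below

theorem eds_three (hx : IsAbscissaSequence a b x y) :
    h 3 = (shortCurve a b).Ψ₃.eval (x 1) := by
  have h_mul : h 3 * 1 = (x 1 - x 2) * y ^ 2 := hx.eds_add_two_mul 1
  have h_double := hx.double (x 1)
  simp only [additionForm] at h_double
  simp only [WeierstrassCurve.Ψ₃, WeierstrassCurve.b₂, WeierstrassCurve.b₄, WeierstrassCurve.b₆,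
    WeierstrassCurve.b₈, shortCurve, eval_add, eval_mul, eval_pow, eval_C, eval_X, eval_ofNat]
  linear_combination h_mul - h_double

theorem sub_three_mul_sq (hx : IsAbscissaSequence a b x y) :
    (x 1 - x 3) * (x 1 - x 2) ^ 2 =
      2 * x 1 * (x 1 - x 2) ^ 2 - 2 * (x 1 + x 2) * (x 1 * x 2 + a) - 4 * b := by
  have h_one := hx.add_sub 0 (x 1)
  have h_add_one := hx.add_sub 0 (x 1 + 1)
  simp only [additionForm, zero_add] at h_one h_add_one
  linear_combination h_add_one - h_one

theorem eds_four (hx : IsAbscissaSequence a b x y) :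
    h 4 = (shortCurve a b).preΨ₄.eval (x 1) * y := by
  have h_three : h 3 * 1 = (x 1 - x 2) * y ^ 2 := hx.eds_add_two_mul 1
  have h_four : h 4 * y = (x 1 - x 3) * h 3 ^ 2 := hx.eds_add_two_mul 2
  have x_two : x 2 * y ^ 2 = (x 1 ^ 2 - a) ^ 2 - 8 * b * x 1 := by
    have h_double := hx.double 0
    rw [additionForm] at h_double
    linear_combination h_double
  have y_sq := hx.y_sq
  apply mul_right_cancel₀ hx.y_ne_zero
  rw [mul_assoc, ← sq]
  calc h 4 * y
      = (x 1 - x 3) * (x 1 - x 2) ^ 2 * y ^ 4 := by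
        rw [h_four, ← mul_one (h 3), h_three]; ring
    _ = 2 * x 1 * (x 1 * y ^ 2 - x 2 * y ^ 2) ^ 2 -
          2 * (x 1 * y ^ 2 + x 2 * y ^ 2) * (x 1 * (x 2 * y ^ 2) + a * y ^ 2) -
            4 * b * (y ^ 2) ^ 2 := by
        rw [hx.sub_three_mul_sq]; ring
    _ = (shortCurve a b).preΨ₄.eval (x 1) * y ^ 2 := by
        rw [x_two, y_sq]
        simp only [WeierstrassCurve.Ψ₂Sq, WeierstrassCurve.preΨ₄, WeierstrassCurve.b₂,
          WeierstrassCurve.b₄, WeierstrassCurve.b₆, WeierstrassCurve.b₈, shortCurve, eval_add,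
          eval_mul, eval_pow, eval_C, eval_X, eval_ofNat]
        ring

theorem eds_eq_normEDS (hx : IsAbscissaSequence a b x y) (n : ℕ) :
    h n = normEDS y ((shortCurve a b).Ψ₃.eval (x 1)) ((shortCurve a b).preΨ₄.eval (x 1)) n :=
  eq_normEDS_of_recurrence hx.y_ne_zero rfl rfl rfl hx.eds_three hx.eds_four hx.eds_odd
    hx.eds_even n

theorem eds_eq_preΨ (hx : IsAbscissaSequence a b x y) (n : ℕ) :
    h n = ((shortCurve a b).preΨ n).eval (x 1) * if Even n then y else 1 := by
  have h_preΨ := map_preNormEDS (evalRingHom (x 1)) ((shortCurve a b).Ψ₂Sq ^ 2)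
    (shortCurve a b).Ψ₃ (shortCurve a b).preΨ₄ n
  simp only [coe_evalRingHom, eval_pow, ← hx.y_sq, ← pow_mul] at h_preΨ
  rw [hx.eds_eq_normEDS, normEDS, WeierstrassCurve.preΨ, h_preΨ]
  simp only [Int.even_coe_nat]

theorem eval_ΨSq (hx : IsAbscissaSequence a b x y) (n : ℕ) :
    ((shortCurve a b).ΨSq n).eval (x 1) = h n ^ 2 := by
  rw [hx.eds_eq_preΨ, WeierstrassCurve.ΨSq]
  split_ifs <;> simp_all [← hx.y_sq, mul_pow]

theorem eval_Φ (hx : IsAbscissaSequence a b x y) (n : ℕ) :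
    ((shortCurve a b).Φ (n + 1 : ℕ)).eval (x 1) = x 1 * h (n + 1) ^ 2 - h (n + 2) * h n := by
  have h_index : ((n + 1 : ℕ) : ℤ) + 1 = (n + 2 : ℕ) ∧ ((n + 1 : ℕ) : ℤ) - 1 = n := by lia
  rw [← hx.eval_ΨSq, hx.eds_eq_preΨ n, hx.eds_eq_preΨ (n + 2), WeierstrassCurve.Φ, h_index.1,
    h_index.2]
  have h_succ : Even ((n + 1 : ℕ) : ℤ) ↔ ¬ Even n := by rw [Int.even_coe_nat, Nat.even_add_one]
  have h_add_two : Even (n + 2) ↔ Even n := by simp [parity_simps]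
  simp only [h_succ, h_add_two, ite_not, eval_sub, eval_mul, eval_X]
  split_ifs
  · rw [← hx.y_sq]
    ring
  · simp

theorem mul_eval_ΨSq (hx : IsAbscissaSequence a b x y) (n : ℕ) :
    x (n + 1) * ((shortCurve a b).ΨSq (n + 1 : ℕ)).eval (x 1) =
      ((shortCurve a b).Φ (n + 1 : ℕ)).eval (x 1) := by
  rw [hx.eval_ΨSq, hx.eval_Φ, hx.eds_add_two_mul]
  ring

end IsAbscissaSequence

end MultiplesOfAPoint

section Algebraicity

variable {R S A : Type*} [CommRing R] [CommRing S] [CommRing A] [Algebra R A]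

theorem isIntegral_of_monic_of_isIntegral_coeff [Algebra R S] [Algebra S A] [IsScalarTower R S A]
    {q : S[X]} (q_monic : q.Monic) (q_coeff : ∀ i, IsIntegral R (q.coeff i)) {x : A}
    (hx : aeval x q = 0) : IsIntegral R x := by
  have q_lifts : q ∈ lifts (algebraMap (integralClosure R S) S) :=
    (lifts_iff_coeff_lifts q).mpr fun i => ⟨⟨q.coeff i, q_coeff i⟩, rfl⟩
  obtain ⟨p, rfl, -, p_monic⟩ := lifts_and_natDegree_eq_and_monic q_lifts q_monic
  rw [aeval_map_algebraMap] at hx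
  exact isIntegral_trans x ⟨p, p_monic, hx⟩

theorem isIntegral_coeff_scaleRoots [Algebra R S] {p : S[X]} (p_monic : p.Monic) {r : R}
    (hr : ∀ i, IsIntegral R (r • p.coeff i)) (i : ℕ) :
    IsIntegral R ((p.scaleRoots (algebraMap R S r)).coeff i) := by
  rw [coeff_scaleRoots]
  rcases lt_trichotomy i p.natDegree with hi | rfl | hi
  · obtain ⟨k, hk⟩ := Nat.exists_eq_add_of_lt hi
    have h_mul : p.coeff i * algebraMap R S r ^ (p.natDegree - i) =
        r • p.coeff i * algebraMap R S r ^ k := by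
      rw [Algebra.smul_def, show p.natDegree - i = k + 1 by lia]
      ring
    exact h_mul ▸ (hr i).mul (isIntegral_algebraMap.pow k)
  · simpa [p_monic.coeff_natDegree] using isIntegral_one
  · simpa [coeff_eq_zero_of_natDegree_lt hi] using isIntegral_zero

theorem isAlgebraic_of_isIntegral_of_isAlgebraic [IsDomain R] [Algebra R S] [Algebra S A]
    [IsScalarTower R S A] [Algebra.IsAlgebraic R S] {x : A} (hx : IsIntegral S x) :
    IsAlgebraic R x := by
  obtain ⟨p, p_monic, p_root⟩ := hx
  classical
  obtain ⟨r, hr, r_coeff⟩ :=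
    Algebra.IsAlgebraic.exists_integral_multiples R (p.support.image p.coeff)
  have r_smul_coeff (i : ℕ) : IsIntegral R (r • p.coeff i) := by
    by_cases hi : p.coeff i = 0
    · simpa [hi] using isIntegral_zero
    · exact r_coeff _ (Finset.mem_image_of_mem _ (mem_support_iff.mpr hi))
  have r_smul_root : aeval (r • x) (p.scaleRoots (algebraMap R S r)) = 0 := by
    rw [Algebra.smul_def, IsScalarTower.algebraMap_apply R S A]
    exact scaleRoots_aeval_eq_zero p_root
  refine .of_smul_isIntegral (y := r) (by rwa [isNilpotent_iff_eq_zero]) ?_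
  exact isIntegral_of_monic_of_isIntegral_coeff ((monic_scaleRoots_iff _).mpr p_monic)
    (isIntegral_coeff_scaleRoots p_monic r_smul_coeff) r_smul_root

theorem isAlgebraic_of_eval_ΨSq_eq_zero [IsDomain R] {a b x : A}
    (ha : IsAlgebraic R a) (hb : IsAlgebraic R b) {n : ℤ} (hn : IsUnit (n : R))
    (hx : ((shortCurve a b).ΨSq n).eval x = 0) : IsAlgebraic R x := by
  let S := Subalgebra.algebraicClosure R A
  let W : WeierstrassCurve S := shortCurve ⟨a, ha⟩ ⟨b, hb⟩
  obtain ⟨u, hu⟩ : ∃ u : S, u * n ^ 2 = 1 := by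
    obtain ⟨u, hu⟩ := (hn.map (algebraMap R S)).pow 2 |>.exists_left_inv
    exact ⟨u, by simpa using hu⟩
  have hW : W.map (algebraMap S A) = shortCurve a b := by
    simp only [W, shortCurve, WeierstrassCurve.map, map_zero]
    rfl
  apply isAlgebraic_of_isIntegral_of_isAlgebraic (S := S)
  refine ⟨C u * W.ΨSq n, ?_, ?_⟩
  · refine monic_of_natDegree_le_of_coeff_eq_one (n.natAbs ^ 2 - 1)
      ((natDegree_C_mul_le _ _).trans (W.natDegree_ΨSq_le n)) ?_
    rw [coeff_C_mul, W.coeff_ΨSq, hu]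
  · rw [← eval_map, Polynomial.map_mul, ← WeierstrassCurve.map_ΨSq, hW, eval_mul, hx, mul_zero]

/-- Complex polynomials in `t` act on functions on `(0, 1)` through their values. -/
noncomputable abbrev polynomialAlgebra : Algebra ℂ[X] (Set.Ioo (0 : ℝ) 1 → ℂ) :=
  (RingHom.pi fun t : Set.Ioo (0 : ℝ) 1 => evalRingHom ((t : ℝ) : ℂ)).toAlgebra

attribute [local instance] polynomialAlgebra

theorem aeval_equivMvPolynomial_symm (c : Set.Ioo (0 : ℝ) 1 → ℂ) (P : MvPolynomial (Fin 2) ℂ)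
    (t : Set.Ioo (0 : ℝ) 1) :
    aeval c ((Bivariate.equivMvPolynomial ℂ).symm P) t =
      MvPolynomial.eval ![((t : ℝ) : ℂ), c t] P := by
  let evalAt : MvPolynomial (Fin 2) ℂ →+* ℂ := (Pi.evalRingHom (fun _ => ℂ) t).comp <|
    (aeval c).toRingHom.comp (Bivariate.equivMvPolynomial ℂ).symm.toRingHom
  suffices evalAt = MvPolynomial.eval ![((t : ℝ) : ℂ), c t] from RingHom.congr_fun this P
  apply MvPolynomial.ringHom_ext
  · intro r
    simp [evalAt, RingHom.algebraMap_toAlgebra]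
  · intro i
    fin_cases i <;> simp [evalAt, RingHom.algebraMap_toAlgebra]

theorem algebraicOverCt_iff_isAlgebraic {c : ℝ → ℂ} :
    AlgebraicOverCt c ↔ IsAlgebraic ℂ[X] fun t : Set.Ioo (0 : ℝ) 1 => c t := by
  have h_root (P : MvPolynomial (Fin 2) ℂ) :
      aeval (fun t : Set.Ioo (0 : ℝ) 1 => c t) ((Bivariate.equivMvPolynomial ℂ).symm P) = 0 ↔
        ∀ t ∈ Set.Ioo (0 : ℝ) 1, MvPolynomial.eval ![(t : ℂ), c t] P = 0 := by
    simp only [funext_iff, aeval_equivMvPolynomial_symm, Pi.zero_apply, Subtype.forall]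
  rw [AlgebraicOverCt, IsAlgebraic, (Bivariate.equivMvPolynomial ℂ).symm.surjective.exists]
  simp only [h_root, ne_eq, map_eq_zero_iff _ (AlgEquiv.injective _)]

namespace AlgebraicOverCt

theorem const_mul {f : ℝ → ℂ} (hf : AlgebraicOverCt f) (c : ℂ) :
    AlgebraicOverCt fun t => c * f t := by
  rw [algebraicOverCt_iff_isAlgebraic] at hf ⊢
  convert hf.smul (C c) using 1
  ext t
  simp [Algebra.smul_def, RingHom.algebraMap_toAlgebra]

theorem of_eval_ΨSq_eq_zero {a b x : ℝ → ℂ} (ha : AlgebraicOverCt a) (hb : AlgebraicOverCt b)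
    {n : ℤ} (hn : n ≠ 0)
    (hx : ∀ t ∈ Set.Ioo (0 : ℝ) 1, ((shortCurve (a t) (b t)).ΨSq n).eval (x t) = 0) :
    AlgebraicOverCt x := by
  rw [algebraicOverCt_iff_isAlgebraic] at ha hb ⊢
  have n_unit : IsUnit (n : ℂ[X]) := by
    rw [← map_intCast (C : ℂ →+* ℂ[X])]
    exact isUnit_C.mpr (isUnit_iff_ne_zero.mpr (Int.cast_ne_zero.mpr hn))
  refine isAlgebraic_of_eval_ΨSq_eq_zero ha hb n_unit (funext fun t => ?_)
  let evalAt := Pi.evalRingHom (fun _ : Set.Ioo (0 : ℝ) 1 => ℂ) t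
  have h_map : (shortCurve (fun t : Set.Ioo (0 : ℝ) 1 => a t) fun t => b t).map evalAt =
      shortCurve (a t) (b t) := by
    simp only [shortCurve, WeierstrassCurve.map, map_zero]
    rfl
  rw [Pi.zero_apply, ← hx t t.2, ← h_map, WeierstrassCurve.map_ΨSq]
  exact (eval_map_apply evalAt _).symm

theorem of_sq_eq_cubic {a b x y : ℝ → ℂ} (ha : AlgebraicOverCt a) (hb : AlgebraicOverCt b)
    (hx : AlgebraicOverCt x)
    (hy : ∀ t ∈ Set.Ioo (0 : ℝ) 1, y t ^ 2 = 4 * x t ^ 3 - a t * x t - b t) :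
    AlgebraicOverCt y := by
  rw [algebraicOverCt_iff_isAlgebraic] at *
  have y_sq : (fun t : Set.Ioo (0 : ℝ) 1 => y t) ^ 2 =
      (4 • (fun t : Set.Ioo (0 : ℝ) 1 => x t) ^ 3 -
        (fun t : Set.Ioo (0 : ℝ) 1 => a t) * fun t : Set.Ioo (0 : ℝ) 1 => x t) -
          fun t : Set.Ioo (0 : ℝ) 1 => b t := by
    ext t
    simp [hy t t.2]
  refine .of_pow two_pos ?_
  rw [y_sq]
  exact (((hx.pow 3).nsmul 4).sub (ha.mul hx)).sub hb

end AlgebraicOverCt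

end Algebraicity

section Topology

theorem isPreconnected_compl_of_countable {s : Set ℂ} (hs : s.Countable) : IsPreconnected sᶜ :=
  (hs.isConnected_compl_of_one_lt_rank (by simp)).isPreconnected

theorem frequently_notMem_of_countable {s : Set ℂ} (hs : s.Countable) (z : ℂ) :
    ∃ᶠ w in 𝓝[≠] z, w ∉ s := by
  have h_dense := (hs.insert z).dense_compl ℂ
  have h_freq := mem_closure_iff_frequently.mp (h_dense z)
  rw [frequently_nhdsWithin_iff]
  refine h_freq.mono fun w hw => ?_
  rw [Set.mem_compl_iff, Set.mem_insert_iff, not_or] at hw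
  exact ⟨hw.2, hw.1⟩

theorem isPreconnected_ball_sdiff_center (z : ℂ) (ε : ℝ) :
    IsPreconnected (Metric.ball z ε \ {z}) := by
  have h_polar : Metric.ball z ε \ {z} =
      (fun p : ℝ × ℂ => z + p.1 * p.2) '' (Set.Ioo 0 ε ×ˢ Metric.sphere 0 1) := by
    ext w
    constructor
    · rintro ⟨hw, w_ne : w ≠ z⟩
      have norm_pos : 0 < ‖w - z‖ := norm_pos_iff.mpr (sub_ne_zero.mpr w_ne)
      have norm_ne : (‖w - z‖ : ℂ) ≠ 0 := by exact_mod_cast norm_pos.ne'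
      refine ⟨(‖w - z‖, (w - z) / ‖w - z‖), ⟨⟨norm_pos, mem_ball_iff_norm.mp hw⟩, ?_⟩, ?_⟩
      · simp [norm_pos.ne']
      · simp [mul_div_cancel₀ _ norm_ne]
    · rintro ⟨⟨r, θ⟩, ⟨⟨r_pos, r_lt⟩, hθ⟩, rfl⟩
      have θ_norm : ‖θ‖ = 1 := mem_sphere_zero_iff_norm.mp hθ
      have θ_ne : θ ≠ 0 := norm_ne_zero_iff.mp (by simp [θ_norm])
      simp_all [abs_of_pos, r_pos.ne']
  rw [h_polar]
  exact (isPreconnected_Ioo.prod (isPreconnected_sphere (by simp) 0 1)).image _ (by fun_prop)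

theorem eventually_eq_of_hasDerivAt_zero {f : ℂ → ℂ} {z l : ℂ}
    (hf : ∀ᶠ w in 𝓝[≠] z, HasDerivAt f 0 w) (hl : Tendsto f (𝓝[≠] z) (𝓝 l)) :
    ∀ᶠ w in 𝓝[≠] z, f w = l := by
  obtain ⟨ε, hε, hf⟩ := Metric.eventually_nhds_iff_ball.mp (eventually_nhdsWithin_iff.mp hf)
  let U : Set ℂ := Metric.ball z ε \ {z}
  have U_open : IsOpen U := Metric.isOpen_ball.sdiff isClosed_singleton
  have U_mem : U ∈ 𝓝[≠] z :=
    sdiff_mem_nhdsWithin_compl (Metric.ball_mem_nhds z hε) {z}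
  have f_deriv (w : ℂ) (hw : w ∈ U) : HasDerivAt f 0 w := hf w hw.1 hw.2
  filter_upwards [U_mem] with w hw
  refine tendsto_nhds_unique_of_eventuallyEq tendsto_const_nhds hl ?_
  filter_upwards [U_mem] with v hv
  exact U_open.is_const_of_deriv_eq_zero (isPreconnected_ball_sdiff_center z ε)
    (fun u hu => (f_deriv u hu).differentiableAt.differentiableWithinAt)
    (fun u hu => (f_deriv u hu).deriv) hw hv

end Topology

section PeriodPair

open scoped PeriodPair

variable (L : PeriodPair)

theorem weierstrassPExcept_zero_eq (z : ℂ) :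
    L.weierstrassPExcept 0 z = ℘[L] z - 1 / z ^ 2 :=
  eq_sub_of_add_eq (by simpa using L.weierstrassPExcept_add 0 z)

theorem derivWeierstrassPExcept_zero_eq (z : ℂ) :
    L.derivWeierstrassPExcept 0 z = ℘'[L] z + 2 / z ^ 3 :=
  sub_eq_iff_eq_add.mp (by simpa using L.derivWeierstrassPExcept_sub 0 z)

theorem countable_lattice : (L.lattice : Set ℂ).Countable :=
  L.latticeEquivProd.toEquiv.countable_iff.mpr inferInstance

theorem eventually_notMem_lattice_punctured (z : ℂ) : ∀ᶠ w in 𝓝[≠] z, w ∉ L.lattice := by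
  filter_upwards [self_mem_nhdsWithin, mem_nhdsWithin_of_mem_nhds
    (L.compl_lattice_sdiff_singleton_mem_nhds z)] with w w_ne hw
  simp_all

variable {L}

theorem eventually_notMem_lattice {z : ℂ} (hz : z ∉ L.lattice) : ∀ᶠ w in 𝓝 z, w ∉ L.lattice :=
  L.isClosed_lattice.isOpen_compl.mem_nhds hz

variable (L)

theorem tendsto_sq_mul_weierstrassP : Tendsto (fun z => z ^ 2 * ℘[L] z) (𝓝[≠] 0) (𝓝 1) := by
  have h_regular : ContinuousAt (fun z => z ^ 2 * L.weierstrassPExcept 0 z + 1) 0 := by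
    have := (L.analyticAt_weierstrassPExcept 0).continuousAt
    fun_prop
  have h_limit := h_regular.tendsto.mono_left (nhdsWithin_le_nhds (s := {0}ᶜ))
  simp only [ne_eq, OfNat.ofNat_ne_zero, not_false_eq_true, zero_pow, zero_mul, zero_add] at h_limit
  refine h_limit.congr' ?_
  filter_upwards [self_mem_nhdsWithin] with z (z_ne : z ≠ 0)
  rw [weierstrassPExcept_zero_eq]
  field_simp
  ring

variable {L}

theorem hasDerivAt_weierstrassP {z : ℂ} (hz : z ∉ L.lattice) : HasDerivAt ℘[L] (℘'[L] z) z := by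
  rw [← L.deriv_weierstrassP]
  exact (L.analyticOnNhd_weierstrassP z hz).differentiableAt.hasDerivAt

theorem eventually_weierstrassP_ne (w : ℂ) {z : ℂ} (hz : z ∉ L.lattice) :
    ∀ᶠ u in 𝓝[≠] z, ℘[L] u ≠ w := by
  refine ((L.analyticOnNhd_weierstrassP z hz).eventually_eq_or_eventually_ne
    analyticAt_const).resolve_left fun h_eq => ?_
  have h_const : Set.EqOn ℘[L] (fun _ => w) (L.lattice : Set ℂ)ᶜ :=
    L.analyticOnNhd_weierstrassP.eqOn_of_preconnected_of_eventuallyEq analyticOnNhd_const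
      (isPreconnected_compl_of_countable (countable_lattice L)) hz h_eq
  have h_zero : Tendsto (fun u => u ^ 2 * ℘[L] u) (𝓝[≠] 0) (𝓝 0) := by
    have h_limit : Tendsto (fun u : ℂ => u ^ 2 * w) (𝓝 0) (𝓝 0) := by
      simpa using (by fun_prop : Continuous fun u : ℂ => u ^ 2 * w).tendsto 0
    refine (h_limit.mono_left nhdsWithin_le_nhds).congr' ?_
    filter_upwards [eventually_notMem_lattice_punctured L 0] with u hu
    rw [h_const hu]
  exact one_ne_zero (tendsto_nhds_unique (tendsto_sq_mul_weierstrassP L) h_zero)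

theorem not_forall_derivWeierstrassP_eq_zero : ¬ ∀ z ∉ L.lattice, ℘'[L] z = 0 := by
  intro h
  obtain ⟨z, hz⟩ := (eventually_notMem_lattice_punctured L 0).exists
  have h_deriv : ∀ᶠ w in 𝓝[≠] z, HasDerivAt ℘[L] 0 w := by
    filter_upwards [nhdsWithin_le_nhds (eventually_notMem_lattice hz)] with w hw
    exact h w hw ▸ hasDerivAt_weierstrassP hw
  have h_limit : Tendsto ℘[L] (𝓝[≠] z) (𝓝 (℘[L] z)) :=
    (hasDerivAt_weierstrassP hz).continuousAt.tendsto.mono_left nhdsWithin_le_nhds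
  obtain ⟨w, h_ne, h_eq⟩ := ((eventually_weierstrassP_ne (℘[L] z) hz).and
    (eventually_eq_of_hasDerivAt_zero h_deriv h_limit)).exists
  exact h_ne h_eq

theorem hasDerivAt_derivWeierstrassP {z : ℂ} (hz : z ∉ L.lattice) :
    HasDerivAt ℘'[L] (6 * ℘[L] z ^ 2 - L.g₂ / 2) z := by
  have h_deriv {w : ℂ} (hw : w ∉ L.lattice) : HasDerivAt ℘'[L] (deriv ℘'[L] w) w :=
    (L.analyticOnNhd_derivWeierstrassP w hw).differentiableAt.hasDerivAt
  have h_mul (w : ℂ) (hw : w ∉ L.lattice) :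
      ℘'[L] w * (deriv ℘'[L] w - (6 * ℘[L] w ^ 2 - L.g₂ / 2)) = 0 := by
    have h_sq := (h_deriv hw).fun_pow 2
    have hP := hasDerivAt_weierstrassP hw
    have h_cubic := (((hP.fun_pow 3).const_mul 4).fun_sub (hP.const_mul L.g₂)).sub_const L.g₃
    have h_unique := (h_sq.congr_of_eventuallyEq (by
      filter_upwards [eventually_notMem_lattice hw] with u hu
      exact (L.derivWeierstrassP_sq u hu).symm)).unique h_cubic
    simp only [Nat.cast_ofNat, Nat.add_one_sub_one, pow_one] at h_unique
    linear_combination h_unique / 2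
  have h_analytic : AnalyticOnNhd ℂ (fun w => deriv ℘'[L] w - (6 * ℘[L] w ^ 2 - L.g₂ / 2))
      (L.lattice : Set ℂ)ᶜ := by
    intro w hw
    have := (L.analyticOnNhd_derivWeierstrassP w hw).deriv
    have := L.analyticOnNhd_weierstrassP w hw
    fun_prop
  have h_zero := (AnalyticOnNhd.eq_zero_or_eq_zero_of_mul_eq_zero
    L.analyticOnNhd_derivWeierstrassP h_analytic h_mul
    (isPreconnected_compl_of_countable (countable_lattice L))).resolve_left
      not_forall_derivWeierstrassP_eq_zero
  exact sub_eq_zero.mp (h_zero z hz) ▸ h_deriv hz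

end PeriodPair

section AdditionTheorem

open scoped PeriodPair

/-- The abscissa of the third intersection point of the cubic `Y² = 4X³ - g₂X - g₃` with the chord
through the points of parameters `u` and `c - u`. -/
noncomputable def chordAbscissa (L : PeriodPair) (c u : ℂ) : ℂ :=
  (℘'[L] u - ℘'[L] (c - u)) ^ 2 / (4 * (℘[L] u - ℘[L] (c - u)) ^ 2) - ℘[L] u - ℘[L] (c - u)

variable {L : PeriodPair}

theorem hasDerivAt_chordAbscissa {c u : ℂ} (hu : u ∉ L.lattice) (hcu : c - u ∉ L.lattice)
    (h_ne : ℘[L] u - ℘[L] (c - u) ≠ 0) : HasDerivAt (chordAbscissa L c) 0 u := by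
  have h_sub : HasDerivAt (fun u : ℂ => c - u) (-1) u := by
    simpa using (hasDerivAt_id u).const_sub c
  have hx := hasDerivAt_weierstrassP hu
  have hy := (hasDerivAt_weierstrassP hcu).comp u h_sub
  have hp := hasDerivAt_derivWeierstrassP hu
  have hq := (hasDerivAt_derivWeierstrassP hcu).comp u h_sub
  have h_quotient := ((hp.fun_sub hq).fun_pow 2).fun_div (((hx.fun_sub hy).fun_pow 2).const_mul 4)
    (mul_ne_zero (by norm_num : (4 : ℂ) ≠ 0) (pow_ne_zero 2 h_ne))
  refine ((h_quotient.fun_sub hx).fun_sub hy).congr_deriv ?_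
  have hp_sq := L.derivWeierstrassP_sq u hu
  have hq_sq := L.derivWeierstrassP_sq (c - u) hcu
  simp only [Function.comp_apply]
  generalize ℘'[L] u = p, ℘'[L] (c - u) = q, ℘[L] u = x, ℘[L] (c - u) = y at *
  have h_cubic :
      (6 * x ^ 2 + 6 * y ^ 2 - L.g₂) * (x - y) - (p ^ 2 - q ^ 2) - 2 * (x - y) ^ 3 = 0 := by
    rw [hp_sq, hq_sq]; ring
  field_simp
  push_cast
  linear_combination 4 * (x - y) * (p - q) * h_cubic

theorem tendsto_const_sub_nhdsNE (c : ℂ) : Tendsto (fun u : ℂ => c - u) (𝓝[≠] 0) (𝓝[≠] c) := by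
  refine tendsto_nhdsWithin_iff.mpr ⟨?_, ?_⟩
  · simpa using ((by fun_prop : Continuous fun u : ℂ => c - u).tendsto 0).mono_left
      (nhdsWithin_le_nhds (s := {0}ᶜ))
  · filter_upwards [self_mem_nhdsWithin] with u hu
    simpa using hu

theorem eventually_sub_notMem_lattice (c : ℂ) : ∀ᶠ u in 𝓝[≠] 0, c - u ∉ L.lattice :=
  (tendsto_const_sub_nhdsNE c).eventually (eventually_notMem_lattice_punctured L c)

theorem tendsto_comp_const_sub {f : ℂ → ℂ} {c : ℂ} (hf : ContinuousAt f c) :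
    Tendsto (fun u => f (c - u)) (𝓝[≠] 0) (𝓝 (f c)) :=
  hf.tendsto.comp ((tendsto_const_sub_nhdsNE c).mono_right nhdsWithin_le_nhds)

theorem tendsto_sq_mul_weierstrassP_sub {c : ℂ} (hc : c ∉ L.lattice) :
    Tendsto (fun u => u ^ 2 * (℘[L] u - ℘[L] (c - u))) (𝓝[≠] 0) (𝓝 1) := by
  have hy := tendsto_comp_const_sub (hasDerivAt_weierstrassP hc).continuousAt
  have h_sq : Tendsto (fun u : ℂ => u ^ 2) (𝓝[≠] 0) (𝓝 0) := by
    simpa using ((continuous_pow 2).tendsto (0 : ℂ)).mono_left (nhdsWithin_le_nhds (s := {0}ᶜ))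
  simpa [mul_sub] using (tendsto_sq_mul_weierstrassP L).sub (h_sq.mul hy)

theorem eventually_weierstrassP_sub_ne_zero {c : ℂ} (hc : c ∉ L.lattice) :
    ∀ᶠ u in 𝓝[≠] 0, ℘[L] u - ℘[L] (c - u) ≠ 0 := by
  filter_upwards [(tendsto_sq_mul_weierstrassP_sub hc).eventually_ne one_ne_zero] with u hu
  exact right_ne_zero_of_mul hu

/-- With `℘ = r + u⁻²` and `℘' = s - 2u⁻³` near `0`, the poles of the chord abscissa cancel. -/
theorem tendsto_chordAbscissa {c : ℂ} (hc : c ∉ L.lattice) :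
    Tendsto (chordAbscissa L c) (𝓝[≠] 0) (𝓝 (℘[L] c)) := by
  let r := L.weierstrassPExcept 0
  let s := L.derivWeierstrassPExcept 0
  let d (u : ℂ) := u ^ 2 * (℘[L] u - ℘[L] (c - u))
  let e (u : ℂ) := s u - ℘'[L] (c - u)
  let regular (u : ℂ) := (-(1 / 2) * u * e u - (r u - ℘[L] (c - u))) *
    (1 - 1 / 2 * u ^ 3 * e u + d u) / d u ^ 2 - r u - ℘[L] (c - u)
  have h_eq : ∀ᶠ u in 𝓝[≠] 0, regular u = chordAbscissa L c u := by
    filter_upwards [self_mem_nhdsWithin, eventually_weierstrassP_sub_ne_zero hc]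
      with u (u_ne : u ≠ 0) h_ne
    have hr : r u = ℘[L] u - 1 / u ^ 2 := weierstrassPExcept_zero_eq L u
    have hs : s u = ℘'[L] u + 2 / u ^ 3 := derivWeierstrassPExcept_zero_eq L u
    simp only [regular, chordAbscissa, d, e, hr, hs]
    field_simp
    ring
  have hu : Tendsto (fun u : ℂ => u) (𝓝[≠] 0) (𝓝 0) := tendsto_id.mono_left nhdsWithin_le_nhds
  have hr : Tendsto r (𝓝[≠] 0) (𝓝 (r 0)) :=
    (L.analyticAt_weierstrassPExcept 0).continuousAt.tendsto.comp hu
  have hs : Tendsto s (𝓝[≠] 0) (𝓝 (s 0)) :=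
    (L.analyticAt_derivWeierstrassPExcept 0).continuousAt.tendsto.comp hu
  have hy := tendsto_comp_const_sub (hasDerivAt_weierstrassP hc).continuousAt
  have hq := tendsto_comp_const_sub (hasDerivAt_derivWeierstrassP hc).continuousAt
  have hd : Tendsto d (𝓝[≠] 0) (𝓝 1) := tendsto_sq_mul_weierstrassP_sub hc
  have he := hs.sub hq
  have h_limit := ((((((hu.const_mul (-(1 / 2))).mul he).sub (hr.sub hy)).mul
    (((((hu.pow 3).const_mul (1 / 2)).mul he).const_sub 1).add hd)).div
      (hd.pow 2) (by simp)).sub hr).sub hy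
  convert h_limit.congr' h_eq using 2
  linear_combination 3 * L.weierstrassPExcept_zero 0

theorem eventually_chordAbscissa_eq {c : ℂ} (hc : c ∉ L.lattice) :
    ∀ᶠ u in 𝓝[≠] 0, chordAbscissa L c u = ℘[L] c := by
  refine eventually_eq_of_hasDerivAt_zero ?_ (tendsto_chordAbscissa hc)
  filter_upwards [eventually_notMem_lattice_punctured L 0, eventually_sub_notMem_lattice c,
    eventually_weierstrassP_sub_ne_zero hc] with u hu hcu h_ne
  exact hasDerivAt_chordAbscissa hu hcu h_ne

/-- The identity holds for small `u` with `c = u + v` fixed, and propagates to the complement of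
`Λ ∪ (c - Λ)`, which is connected. -/
theorem derivWeierstrassP_sub_sq {u v : ℂ} (hu : u ∉ L.lattice) (hv : v ∉ L.lattice)
    (huv : u + v ∉ L.lattice) : (℘'[L] u - ℘'[L] v) ^ 2 =
      4 * (℘[L] (u + v) + ℘[L] u + ℘[L] v) * (℘[L] u - ℘[L] v) ^ 2 := by
  obtain ⟨c, rfl⟩ : ∃ c, v = c - u := ⟨u + v, by ring⟩
  rw [add_sub_cancel] at huv ⊢
  let poles : Set ℂ := L.lattice ∪ (c - ·) ⁻¹' L.lattice
  have poles_countable : poles.Countable :=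
    (countable_lattice L).union ((countable_lattice L).preimage sub_right_injective)
  have notMem_poles {w : ℂ} : w ∈ polesᶜ ↔ w ∉ L.lattice ∧ c - w ∉ L.lattice := not_or
  have h_analytic (w : ℂ) (hw : w ∈ polesᶜ) :
      AnalyticAt ℂ ℘[L] w ∧ AnalyticAt ℂ ℘'[L] w ∧
        AnalyticAt ℂ (fun u => ℘[L] (c - u)) w ∧ AnalyticAt ℂ (fun u => ℘'[L] (c - u)) w := by
    obtain ⟨hw, hcw⟩ := notMem_poles.mp hw
    exact ⟨L.analyticOnNhd_weierstrassP w hw, L.analyticOnNhd_derivWeierstrassP w hw,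
      (L.analyticOnNhd_weierstrassP _ hcw).fun_comp (by fun_prop),
      (L.analyticOnNhd_derivWeierstrassP _ hcw).fun_comp (by fun_prop)⟩
  have h_local : ∀ᶠ w in 𝓝[≠] 0, (℘'[L] w - ℘'[L] (c - w)) ^ 2 =
      4 * (℘[L] c + ℘[L] w + ℘[L] (c - w)) * (℘[L] w - ℘[L] (c - w)) ^ 2 := by
    filter_upwards [eventually_chordAbscissa_eq huv, eventually_weierstrassP_sub_ne_zero huv]
      with w h_eq h_ne
    rw [← h_eq, chordAbscissa]
    field_simp
    ring
  obtain ⟨w, hw_local, w_ne, hw, hcw⟩ := ((eventually_eventually_nhdsWithin.mpr h_local).and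
    (eventually_mem_nhdsWithin.and ((eventually_notMem_lattice_punctured L 0).and
      (eventually_sub_notMem_lattice c)))).exists
  rw [isOpen_compl_singleton.nhdsWithin_eq w_ne] at hw_local
  refine AnalyticOnNhd.eqOn_of_preconnected_of_eventuallyEq (𝕜 := ℂ)
    (f := fun u => (℘'[L] u - ℘'[L] (c - u)) ^ 2)
    (g := fun u => 4 * (℘[L] c + ℘[L] u + ℘[L] (c - u)) * (℘[L] u - ℘[L] (c - u)) ^ 2)
    ?_ ?_ (isPreconnected_compl_of_countable poles_countable)
    (notMem_poles.mpr ⟨hw, hcw⟩) hw_local (notMem_poles.mpr ⟨hu, hv⟩)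
  all_goals
    intro z hz
    obtain ⟨_, _, _, _⟩ := h_analytic z hz
    fun_prop

end AdditionTheorem

section WeierstrassMultiples

open scoped PeriodPair

variable {L : PeriodPair}

/-- A common value of `(℘, ℘')` at `u` and `v` forces `℘ (z + u) = ℘ (z + v)` by the addition
theorem, although only the left-hand side has a pole at `z = -u` unless `u - v ∈ Λ`. -/
theorem sub_mem_lattice_of_weierstrassP_eq {u v : ℂ} (hu : u ∉ L.lattice) (hv : v ∉ L.lattice)
    (hP : ℘[L] u = ℘[L] v) (hP' : ℘'[L] u = ℘'[L] v) : u - v ∈ L.lattice := by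
  by_contra h_sub
  obtain ⟨s, hs, h_us, h_sub_s, h_pole, h_ne⟩ := ((eventually_notMem_lattice_punctured L 0).and
    ((eventually_sub_notMem_lattice u).and ((eventually_sub_notMem_lattice (u - v)).and
      ((eventually_weierstrassP_sub_ne_zero h_sub).and ((tendsto_const_sub_nhdsNE u).eventually
        (eventually_weierstrassP_ne (℘[L] u) hu)))))).exists
  have s_sub : s - u ∉ L.lattice := by rwa [← neg_sub, neg_mem_iff]
  have s_add : s - u + v ∉ L.lattice := by
    rwa [← neg_mem_iff, show -(s - u + v) = u - v - s by ring]
  have add_u := derivWeierstrassP_sub_sq s_sub hu (by simpa using hs)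
  have add_v := derivWeierstrassP_sub_sq s_sub hv s_add
  rw [sub_add_cancel] at add_u
  rw [← hP, ← hP', show s - u + v = -(u - v - s) by ring, L.weierstrassP_neg] at add_v
  have h_ne' : ℘[L] (s - u) - ℘[L] u ≠ 0 := by
    rwa [← L.weierstrassP_neg (s - u), neg_sub, sub_ne_zero]
  refine h_pole (mul_left_cancel₀ (pow_ne_zero 2 h_ne') ?_)
  linear_combination (add_v - add_u) / 4

theorem weierstrassP_ne {u v : ℂ} (hu : u ∉ L.lattice) (hv : v ∉ L.lattice)
    (h_add : u + v ∉ L.lattice) (h_sub : u - v ∉ L.lattice) : ℘[L] u ≠ ℘[L] v := by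
  intro h_eq
  have h_sq : ℘'[L] u ^ 2 = ℘'[L] v ^ 2 := by
    rw [L.derivWeierstrassP_sq u hu, L.derivWeierstrassP_sq v hv, h_eq]
  rcases sq_eq_sq_iff_eq_or_eq_neg.mp h_sq with h | h
  · exact h_sub (sub_mem_lattice_of_weierstrassP_eq hu hv h_eq h)
  · refine h_add (sub_neg_eq_add u v ▸ sub_mem_lattice_of_weierstrassP_eq hu ?_ ?_ ?_)
    · rwa [neg_mem_iff]
    · rwa [L.weierstrassP_neg]
    · rwa [L.derivWeierstrassP_neg]

theorem sub_weierstrassP_add_mul_sub_weierstrassP_sub {u v : ℂ} (hu : u ∉ L.lattice)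
    (hv : v ∉ L.lattice) (h_add : u + v ∉ L.lattice) (h_sub : u - v ∉ L.lattice) (w : ℂ) :
    (w - ℘[L] (u + v)) * (w - ℘[L] (u - v)) * (℘[L] u - ℘[L] v) ^ 2 =
      additionForm (-L.g₂ / 4) (-L.g₃ / 4) (℘[L] u) (℘[L] v) w := by
  have h_ne := sub_ne_zero.mpr (weierstrassP_ne hu hv h_add h_sub)
  have chord_add := derivWeierstrassP_sub_sq hu hv h_add
  have chord_sub := derivWeierstrassP_sub_sq (v := -v) hu (by rwa [neg_mem_iff])
    (by rwa [← sub_eq_add_neg])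
  rw [L.derivWeierstrassP_neg, L.weierstrassP_neg, ← sub_eq_add_neg] at chord_sub
  have hp := L.derivWeierstrassP_sq u hu
  have hq := L.derivWeierstrassP_sq v hv
  generalize ℘'[L] u = p, ℘'[L] v = q, ℘[L] u = x, ℘[L] v = y, ℘[L] (u + v) = x_add,
    ℘[L] (u - v) = x_sub at *
  have h_prod : (4 * (w - x_add) * (x - y) ^ 2) * (4 * (w - x_sub) * (x - y) ^ 2) =
      (p ^ 2 - q ^ 2) ^ 2 - 8 * (x + y + w) * (x - y) ^ 2 * (p ^ 2 + q ^ 2) +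
        16 * (x + y + w) ^ 2 * (x - y) ^ 4 := by
    have h_add : 4 * (w - x_add) * (x - y) ^ 2 = 4 * (x + y + w) * (x - y) ^ 2 - (p - q) ^ 2 := by
      linear_combination chord_add
    have h_sub : 4 * (w - x_sub) * (x - y) ^ 2 = 4 * (x + y + w) * (x - y) ^ 2 - (p + q) ^ 2 := by
      linear_combination chord_sub
    rw [h_add, h_sub]
    ring
  rw [hp, hq] at h_prod
  rw [additionForm]
  refine mul_left_cancel₀ (mul_ne_zero (by norm_num : (16 : ℂ) ≠ 0) (pow_ne_zero 2 h_ne)) ?_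
  linear_combination h_prod

/-- The limiting case `v → u` of the addition theorem, with both sides divided by `(v - u)²`. -/
theorem deriv_derivWeierstrassP_sq {u : ℂ} (hu : u ∉ L.lattice) (h_double : 2 * u ∉ L.lattice) :
    (6 * ℘[L] u ^ 2 - L.g₂ / 2) ^ 2 = 4 * (℘[L] (2 * u) + 2 * ℘[L] u) * ℘'[L] u ^ 2 := by
  rw [two_mul] at h_double
  have h_add : Tendsto (fun v : ℂ => v + u) (𝓝[≠] u) (𝓝 (u + u)) :=
    ((by fun_prop : Continuous fun v : ℂ => v + u).tendsto u).mono_left nhdsWithin_le_nhds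
  have hx : Tendsto ℘[L] (𝓝[≠] u) (𝓝 (℘[L] u)) :=
    (hasDerivAt_weierstrassP hu).continuousAt.tendsto.mono_left nhdsWithin_le_nhds
  have hx_add := (hasDerivAt_weierstrassP h_double).continuousAt.tendsto.comp h_add
  have slope_x := (hasDerivAt_weierstrassP hu).tendsto_slope
  have slope_p := (hasDerivAt_derivWeierstrassP hu).tendsto_slope
  have h_limit := tendsto_nhds_unique_of_eventuallyEq (slope_p.pow 2)
    ((((hx_add.add hx).add_const (℘[L] u)).const_mul 4).mul (slope_x.pow 2)) (by
      filter_upwards [eventually_notMem_lattice_punctured L u,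
        h_add.eventually (eventually_notMem_lattice h_double)] with v hv hvu
      simp only [slope_def_field, Function.comp_apply, div_pow, derivWeierstrassP_sub_sq hv hu hvu]
      ring)
  rw [h_limit, two_mul]
  ring

theorem weierstrassP_two_mul_sub_mul {u : ℂ} (hu : u ∉ L.lattice) (h_double : 2 * u ∉ L.lattice)
    (w : ℂ) : (℘[L] (2 * u) - w) * ℘'[L] u ^ 2 =
      additionForm (-L.g₂ / 4) (-L.g₃ / 4) (℘[L] u) (℘[L] u) w := by
  have h_sq := L.derivWeierstrassP_sq u hu
  have h_tangent := deriv_derivWeierstrassP_sq hu h_double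
  rw [additionForm]
  linear_combination -h_tangent / 4 - (w + 2 * ℘[L] u) * h_sq

/-- The complex numbers with a nonzero multiple in the lattice, i.e. the preimage in `ℂ` of the
torsion subgroup of `ℂ / Λ`. -/
def torsionPoints (L : PeriodPair) : Set ℂ :=
  {z | ∃ n : ℕ, ((n + 1 : ℕ) : ℂ) * z ∈ L.lattice}

theorem countable_torsionPoints (L : PeriodPair) : (torsionPoints L).Countable := by
  have h_union : torsionPoints L = ⋃ n : ℕ, (((n + 1 : ℕ) : ℂ) * ·) ⁻¹' L.lattice := by
    ext z
    simp [torsionPoints]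
  rw [h_union]
  exact Set.countable_iUnion fun n =>
    (countable_lattice L).preimage (mul_right_injective₀ (Nat.cast_ne_zero.mpr n.succ_ne_zero))

theorem isAbscissaSequence_weierstrassP {z : ℂ} (hz : z ∉ torsionPoints L) :
    IsAbscissaSequence (-L.g₂ / 4) (-L.g₃ / 4) (fun n => ℘[L] (n * z)) (℘'[L] z) := by
  have notMem (n : ℕ) : ((n + 1 : ℕ) : ℂ) * z ∉ L.lattice := fun h => hz ⟨n, h⟩
  have one_mul_notMem : ((1 : ℕ) : ℂ) * z ∉ L.lattice := notMem 0
  have h_add (n : ℕ) : ((n + 2 : ℕ) : ℂ) * z + (1 : ℕ) * z = (n + 3 : ℕ) * z := by push_cast; ring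
  have h_sub (n : ℕ) : ((n + 2 : ℕ) : ℂ) * z - (1 : ℕ) * z = (n + 1 : ℕ) * z := by push_cast; ring
  have add_notMem (n : ℕ) : ((n + 2 : ℕ) : ℂ) * z + (1 : ℕ) * z ∉ L.lattice := by
    rw [h_add]
    exact notMem (n + 2)
  have sub_notMem (n : ℕ) : ((n + 2 : ℕ) : ℂ) * z - (1 : ℕ) * z ∉ L.lattice := by
    rw [h_sub]
    exact notMem n
  refine ⟨fun n => ?_, fun w => ?_, fun n w => ?_⟩
  · exact (weierstrassP_ne (notMem (n + 1)) one_mul_notMem (add_notMem n) (sub_notMem n)).symm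
  · simpa using weierstrassP_two_mul_sub_mul (by simpa using notMem 0) (notMem 1) w
  · rw [← h_add n, ← h_sub n]
    exact sub_weierstrassP_add_mul_sub_weierstrassP_sub (notMem (n + 1)) one_mul_notMem
      (add_notMem n) (sub_notMem n) w

/-- At a generic `z`, `℘ (n z) Ψₙ²(℘ z) = Φₙ(℘ z)`. As `z → z₀` the right-hand side stays bounded,
while `℘ (n z)` has a double pole. -/
theorem eval_ΨSq_weierstrassP_eq_zero {z₀ : ℂ} (hz₀ : z₀ ∉ L.lattice) {n : ℕ}
    (hn : (n : ℂ) * z₀ ∈ L.lattice) :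
    ((shortCurve (-L.g₂ / 4) (-L.g₃ / 4)).ΨSq n).eval (℘[L] z₀) = 0 := by
  cases n with
  | zero => simp
  | succ n =>
  set ψ := (shortCurve (-L.g₂ / 4) (-L.g₃ / 4)).ΨSq (n + 1 : ℕ)
  set φ := (shortCurve (-L.g₂ / 4) (-L.g₃ / 4)).Φ (n + 1 : ℕ)
  let s (z : ℂ) : ℂ := (n + 1 : ℕ) * (z - z₀)
  have hs_zero : Tendsto s (𝓝[≠] z₀) (𝓝 0) := by
    simpa [s] using ((by fun_prop : Continuous s).tendsto z₀).mono_left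
      (nhdsWithin_le_nhds (s := {z₀}ᶜ))
  have hs : Tendsto s (𝓝[≠] z₀) (𝓝[≠] 0) := by
    refine tendsto_nhdsWithin_iff.mpr ⟨hs_zero, ?_⟩
    filter_upwards [self_mem_nhdsWithin] with z hz
    exact mul_ne_zero (Nat.cast_ne_zero.mpr n.succ_ne_zero) (sub_ne_zero.mpr hz)
  have hx : Tendsto ℘[L] (𝓝[≠] z₀) (𝓝 (℘[L] z₀)) :=
    (hasDerivAt_weierstrassP hz₀).continuousAt.tendsto.mono_left nhdsWithin_le_nhds
  have h_eval : ∃ᶠ z in 𝓝[≠] z₀,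
      s z ^ 2 * ℘[L] (s z) * ψ.eval (℘[L] z) = s z ^ 2 * φ.eval (℘[L] z) := by
    refine (frequently_notMem_of_countable (countable_torsionPoints L) z₀).mono fun z hz => ?_
    have h_multiple := (isAbscissaSequence_weierstrassP hz).mul_eval_ΨSq n
    have h_periodic : ℘[L] ((n + 1 : ℕ) * z) = ℘[L] (s z) := by
      rw [← L.weierstrassP_add_coe (s z) ⟨_, hn⟩]
      simp only [s]
      congr 1
      ring
    simp only [Nat.cast_one, one_mul] at h_multiple
    rw [mul_assoc, ← h_periodic, h_multiple]
  simpa using tendsto_nhds_unique_of_frequently_eq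
    (((tendsto_sq_mul_weierstrassP L).comp hs).mul ((ψ.continuous.tendsto _).comp hx))
    ((hs_zero.pow 2).mul ((φ.continuous.tendsto _).comp hx)) h_eval

end WeierstrassMultiples

section Families

theorem wp_eq_weierstrassP (L : PeriodPair) : wp L.ω₁ L.ω₂ = L.weierstrassP := by
  ext z
  -- The series `wp` has `z + λ` where `PeriodPair.hasSum_weierstrassP` has `z - λ`.
  let e : ℤ × ℤ ≃ L.lattice := L.latticeEquivProd.symm.toEquiv.trans (Equiv.neg _)
  have he (p : ℤ × ℤ) : (e p : ℂ) = -latPt L.ω₁ L.ω₂ p := by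
    simp [e, latPt, L.latticeEquiv_symm_apply]
  have h_sum := e.hasSum_iff.mpr (L.hasSum_weierstrassP z)
  rw [← h_sum.tsum_eq, h_sum.summable.tsum_eq_add_tsum_ite 0, wp]
  simp only [Function.comp_apply, he]
  congr 1
  · simp [latPt]
  · exact tsum_congr fun p => by split_ifs <;> simp

theorem tsum_latPt_pow_inv (L : PeriodPair) {n : ℕ} (hn : n ≠ 0) :
    (∑' p : ℤ × ℤ, if p = 0 then 0 else ((latPt L.ω₁ L.ω₂ p) ^ n)⁻¹) = L.G n := by
  rw [PeriodPair.G, ← L.latticeEquivProd.symm.toEquiv.tsum_eq]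
  refine tsum_congr fun p => ?_
  have hp : (L.latticeEquivProd.symm.toEquiv p : ℂ) = latPt L.ω₁ L.ω₂ p :=
    L.latticeEquiv_symm_apply p
  rw [hp]
  split_ifs with h_zero
  · simp [h_zero, latPt, hn]
  · rfl

theorem g2_eq_g₂ (L : PeriodPair) : g2 L.ω₁ L.ω₂ = L.g₂ :=
  congrArg (60 * ·) (tsum_latPt_pow_inv L four_ne_zero)

theorem g3_eq_g₃ (L : PeriodPair) : g3 L.ω₁ L.ω₂ = L.g₃ :=
  congrArg (140 * ·) (tsum_latPt_pow_inv L (n := 6) (by norm_num))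

theorem algebraicOverCt_wp_of_torsion {ω₁ ω₂ : ℝ → ℂ}
    (hindep : ∀ t ∈ Set.Ioo (0 : ℝ) 1, LinearIndependent ℝ ![ω₁ t, ω₂ t])
    (hg2 : AlgebraicOverCt (fun t => g2 (ω₁ t) (ω₂ t)))
    (hg3 : AlgebraicOverCt (fun t => g3 (ω₁ t) (ω₂ t)))
    {v : ℝ → ℂ} {n : ℕ} (hn : n ≠ 0)
    (hv : ∀ t (ht : t ∈ Set.Ioo (0 : ℝ) 1), v t ∉ (PeriodPair.mk _ _ (hindep t ht)).lattice)
    (hnv : ∀ t (ht : t ∈ Set.Ioo (0 : ℝ) 1),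
      n * v t ∈ (PeriodPair.mk _ _ (hindep t ht)).lattice) :
    AlgebraicOverCt (fun t => wp (ω₁ t) (ω₂ t) (v t)) ∧
      AlgebraicOverCt (fun t => deriv (wp (ω₁ t) (ω₂ t)) (v t)) := by
  have wp_algebraic : AlgebraicOverCt fun t => wp (ω₁ t) (ω₂ t) (v t) := by
    refine .of_eval_ΨSq_eq_zero (hg2.const_mul (-1 / 4)) (hg3.const_mul (-1 / 4))
      (Nat.cast_ne_zero.mpr hn) fun t ht => ?_
    let L : PeriodPair := ⟨ω₁ t, ω₂ t, hindep t ht⟩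
    have h_zero := eval_ΨSq_weierstrassP_eq_zero (L := L) (hv t ht) (hnv t ht)
    rw [← wp_eq_weierstrassP, ← g2_eq_g₂, ← g3_eq_g₃] at h_zero
    convert h_zero using 4 <;> ring
  refine ⟨wp_algebraic, .of_sq_eq_cubic hg2 hg3 wp_algebraic fun t ht => ?_⟩
  let L : PeriodPair := ⟨ω₁ t, ω₂ t, hindep t ht⟩
  have h_cubic := L.derivWeierstrassP_sq (v t) (hv t ht)
  rwa [← L.deriv_weierstrassP, ← wp_eq_weierstrassP, ← g2_eq_g₂, ← g3_eq_g₃] at h_cubic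

theorem den_mul_den_mul_mem_lattice (L : PeriodPair) (r s : ℚ) :
    ((r.den * s.den : ℕ) : ℂ) * (r * L.ω₁ + s * L.ω₂) ∈ L.lattice := by
  have den_mul (q : ℚ) : (q.den : ℂ) * q = q.num := by exact_mod_cast Rat.den_mul_eq_num q
  refine PeriodPair.mem_lattice.mpr ⟨s.den * r.num, r.den * s.num, ?_⟩
  push_cast
  rw [← den_mul, ← den_mul]
  ring

theorem statement11_general (ω₁ ω₂ : ℝ → ℂ)
    (hindep : ∀ t ∈ Set.Ioo (0 : ℝ) 1, LinearIndependent ℝ ![ω₁ t, ω₂ t])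
    (hg2 : AlgebraicOverCt (fun t => g2 (ω₁ t) (ω₂ t)))
    (hg3 : AlgebraicOverCt (fun t => g3 (ω₁ t) (ω₂ t)))
    (r s : ℚ) (hrs : ¬ ((∃ n : ℤ, r = n) ∧ ∃ n : ℤ, s = n)) :
    AlgebraicOverCt (fun t => wp (ω₁ t) (ω₂ t) (r * ω₁ t + s * ω₂ t)) ∧
      AlgebraicOverCt (fun t => deriv (wp (ω₁ t) (ω₂ t)) (r * ω₁ t + s * ω₂ t)) := by
  refine algebraicOverCt_wp_of_torsion hindep hg2 hg3 (n := r.den * s.den) (by simp)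
    (fun t ht h_mem => hrs ?_) fun t ht => den_mul_den_mul_mem_lattice ⟨ω₁ t, ω₂ t, hindep t ht⟩ r s
  obtain ⟨hr, hs⟩ := PeriodPair.mul_ω₁_add_mul_ω₂_mem_lattice.mp h_mem
  exact ⟨⟨r.num, (Rat.coe_int_num_of_den_eq_one hr).symm⟩,
    ⟨s.num, (Rat.coe_int_num_of_den_eq_one hs).symm⟩⟩

end Families

/-- Let `ω₁, ω₂ : (0,1) → ℂ` be continuous, `ℝ`-linearly independent
for each `t`, and assume `g₂(t), g₃(t)` are algebraic over `ℂ(t)`.  Then for every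
rational `λ` which is not an integer, `t ↦ ℘(λω₁(t), t)` and `t ↦ ℘'(λω₁(t), t)` are
algebraic over `ℂ(t)`, and similarly with `ω₁` replaced by `ω₂`. -/
theorem statement11 (ω₁ ω₂ : ℝ → ℂ)
    (hc1 : ContinuousOn ω₁ (Set.Ioo 0 1)) (hc2 : ContinuousOn ω₂ (Set.Ioo 0 1))
    (hindep : ∀ t ∈ Set.Ioo (0 : ℝ) 1, LinearIndependent ℝ ![ω₁ t, ω₂ t])
    (hg2 : AlgebraicOverCt (fun t => g2 (ω₁ t) (ω₂ t)))
    (hg3 : AlgebraicOverCt (fun t => g3 (ω₁ t) (ω₂ t)))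
    (lam : ℚ) (hlam : ¬ ∃ n : ℤ, lam = (n : ℚ)) :
    (AlgebraicOverCt (fun t => wp (ω₁ t) (ω₂ t) ((lam : ℂ) * ω₁ t)) ∧
      AlgebraicOverCt (fun t => deriv (wp (ω₁ t) (ω₂ t)) ((lam : ℂ) * ω₁ t))) ∧
    (AlgebraicOverCt (fun t => wp (ω₁ t) (ω₂ t) ((lam : ℂ) * ω₂ t)) ∧
      AlgebraicOverCt (fun t => deriv (wp (ω₁ t) (ω₂ t)) ((lam : ℂ) * ω₂ t))) :=
  ⟨by simpa using statement11_general ω₁ ω₂ hindep hg2 hg3 lam 0 fun h => hlam h.1,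
    by simpa using statement11_general ω₁ ω₂ hindep hg2 hg3 0 lam fun h => hlam h.2⟩

end WeierstrassElliptic
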